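/- Let S be the 8×8 matrix S = (1/2)·[[0,0,0,1,−1,0,0,0],[1,0,0,0,0,−1,0,0],[0,1,0,0,0,0,−1,0],[0,0,1,0,0,0,0,−1],[−1,0,0,0,0,1,0,0],[0,−1,0,0,0,0,1,0],[0,0,−1,0,0,0,0,1],[0,0,0,−1,1,0,0,0]] and z a complex number. Then det(z·S − I₈) = 1 − z². Consequently, the resonance condition det(e^{ikℓ} S − I₈) = 0 holds if and only if k = nπ/ℓ for some integer n. -/

import Mathlib

/-!
Rows of `S` come in opposite pairs (1 and 8, 2 and 5, 3 and 6, 4 and 7), so `S = (1/2) U V` with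
`U` of size 8×4 and `V` of size 4×8. By Sylvester's identity `det (1 - U V) = det (1 - V U)`, the
determinant is that of `1 - (z/2) V U`, where `V U` is the adjacency matrix of the 4-cycle, whose
spectrum is `2, 0, 0, -2`; this gives `1 - z ^ 2`. With `z = exp (i k ℓ)` the resonance condition
reads `exp (2 i k ℓ) = 1`, that is, `2 i k ℓ ∈ 2 π i ℤ`.
-/

/-- The factor `U` of `S = (1/2) U V`: it places each row of `V` at its position in `S`, and its
negative at the position of the opposite row. -/
def rowSpread : Matrix (Fin 8) (Fin 4) ℂ :=
  !![1, 0, 0, 0;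
     0, 1, 0, 0;
     0, 0, 1, 0;
     0, 0, 0, 1;
     0, -1, 0, 0;
     0, 0, -1, 0;
     0, 0, 0, -1;
     -1, 0, 0, 0]

/-- The factor `V` of `S = (1/2) U V`: the first four rows of `2 S`. -/
def rowBlock : Matrix (Fin 4) (Fin 8) ℂ :=
  !![0, 0, 0, 1, -1, 0, 0, 0;
     1, 0, 0, 0, 0, -1, 0, 0;
     0, 1, 0, 0, 0, 0, -1, 0;
     0, 0, 1, 0, 0, 0, 0, -1]

lemma rowSpread_mul_rowBlock : rowSpread * rowBlock =
    !![0, 0, 0, 1, -1, 0, 0, 0;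
       1, 0, 0, 0, 0, -1, 0, 0;
       0, 1, 0, 0, 0, 0, -1, 0;
       0, 0, 1, 0, 0, 0, 0, -1;
       -1, 0, 0, 0, 0, 1, 0, 0;
       0, -1, 0, 0, 0, 0, 1, 0;
       0, 0, -1, 0, 0, 0, 0, 1;
       0, 0, 0, -1, 1, 0, 0, 0] := by
  simp [rowSpread, rowBlock]

lemma rowBlock_mul_rowSpread : rowBlock * rowSpread =
    !![0, 1, 0, 1; 1, 0, 1, 0; 0, 1, 0, 1; 1, 0, 1, 0] := by
  simp [rowSpread, rowBlock]

lemma det_one_sub_smul_cycle (w : ℂ) :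
    (1 - w • !![0, 1, 0, 1; 1, 0, 1, 0; 0, 1, 0, 1; 1, 0, 1, 0] :
      Matrix (Fin 4) (Fin 4) ℂ).det = 1 - 4 * w ^ 2 := by
  simp [Matrix.det_succ_row_zero, Fin.sum_univ_succ, Fin.succAbove, Matrix.one_apply]
  ring

/-- For the square bond-scattering matrix `S`, `det(z·S - I₈) = 1 - z²`; hence the
resonance condition `det(e^{ikℓ}S - I₈) = 0` holds iff `k = nπ/ℓ`, `n ∈ ℤ`. -/
theorem square_resonance_condition (ℓ : ℝ) (hℓ : 0 < ℓ) :
    let S : Matrix (Fin 8) (Fin 8) ℂ := (1/2 : ℂ) •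
      !![0, 0, 0, 1, -1, 0, 0, 0;
         1, 0, 0, 0, 0, -1, 0, 0;
         0, 1, 0, 0, 0, 0, -1, 0;
         0, 0, 1, 0, 0, 0, 0, -1;
         -1, 0, 0, 0, 0, 1, 0, 0;
         0, -1, 0, 0, 0, 0, 1, 0;
         0, 0, -1, 0, 0, 0, 0, 1;
         0, 0, 0, -1, 1, 0, 0, 0]
    (∀ z : ℂ, (z • S - 1).det = 1 - z ^ 2) ∧
    (∀ k : ℂ, ((Complex.exp (Complex.I * k * ℓ) • S - 1).det = 0 ↔
      ∃ n : ℤ, k = (n : ℂ) * Real.pi / ℓ)) := by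
  intro S
  have hdet : ∀ z : ℂ, (z • S - 1).det = 1 - z ^ 2 := by
    intro z
    have hneg : z • S - 1 = -(1 - rowSpread * ((z / 2) • rowBlock)) := by
      simp only [S]
      rw [Matrix.mul_smul, rowSpread_mul_rowBlock, neg_sub, smul_smul, mul_one_div]
    -- The sign of `-(1 - …)` disappears because the size 8 is even.
    rw [hneg, Matrix.det_neg, Matrix.det_one_sub_mul_comm, Matrix.smul_mul,
      rowBlock_mul_rowSpread, det_one_sub_smul_cycle]
    simp only [Fintype.card_fin]
    ring
  refine ⟨hdet, fun k => ?_⟩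
  have hℓ' : (ℓ : ℂ) ≠ 0 := by exact_mod_cast hℓ.ne'
  rw [hdet, sub_eq_zero, eq_comm, ← Complex.exp_nat_mul, Complex.exp_eq_one_iff]
  refine exists_congr fun n => ?_
  rw [eq_div_iff hℓ']
  push_cast
  constructor
  · intro h
    apply mul_left_cancel₀ (mul_ne_zero two_ne_zero Complex.I_ne_zero)
    linear_combination h
  · intro h
    linear_combination 2 * Complex.I * h
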